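/- Let G be a finite group, E a nonzero Riesz space, and ρ : G → Aut⁺(E) a positive representation that is principal band irreducible. Then E is Archimedean, E is finite dimensional as a real vector space, and the dimension of E divides the order of G. -/

import Mathlib

/-!
A band that contains the whole orbit of a nonzero vector is all of `E`: it contains the principal
band generated by the invariant vector `∑ g, ρ g |x|`. Applied to the band of vectors that are
infinitesimal relative to some `y`, this shows that `E` is Archimedean; applied to a disjoint
complement, it shows that only `0` is disjoint from a whole nonzero orbit. A positive vector
disjoint from as many of its translates as possible is then an atom. In an Archimedean space the
positive minorants of an atom are its multiples, so distinct vectors in its orbit are disjoint,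
since a finite group acts trivially on a ray that it preserves. The orbit is therefore a basis
of `E`.
-/

/-- A (Riesz) ideal of an ordered real vector space: a submodule `I` such that
`|x| ≤ |y|` and `y ∈ I` imply `x ∈ I`. -/
def IsRieszIdeal {E : Type*} [AddCommGroup E] [Lattice E] [Module ℝ E]
    (I : Submodule ℝ E) : Prop :=
  ∀ x y : E, |x| ≤ |y| → y ∈ I → x ∈ I

/-- A band: an ideal closed under suprema of its subsets (when they exist in `E`). -/
def IsBand {E : Type*} [AddCommGroup E] [Lattice E] [Module ℝ E]
    (B : Submodule ℝ E) : Prop :=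
  IsRieszIdeal B ∧ ∀ (D : Set E) (x : E), D ⊆ (B : Set E) → IsLUB D x → x ∈ B

/-- The disjoint complement of a set `D`. -/
def disjComplement {E : Type*} [AddCommGroup E] [Lattice E] (D : Set E) : Set E :=
  {x : E | ∀ y ∈ D, |x| ⊓ |y| = 0}

/-- A projection band: a band `B` with `E = B ⊕ Bᵈ`. -/
def IsProjectionBand {E : Type*} [AddCommGroup E] [Lattice E] [Module ℝ E]
    (B : Submodule ℝ E) : Prop :=
  IsBand B ∧ ∀ x : E, ∃ y ∈ B, ∃ z ∈ disjComplement (B : Set E), x = y + z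

/-- An order direct sum decomposition `E = L ⊕ M`: every element decomposes uniquely
as a sum of an element of `L` and an element of `M`, and an element is positive iff
both its components are positive. -/
def IsOrderDecomposition {E : Type*} [AddCommGroup E] [Lattice E] [Module ℝ E]
    (L M : Submodule ℝ E) : Prop :=
  (∀ x : E, ∃ y ∈ L, ∃ z ∈ M, x = y + z) ∧
  (∀ x : E, x ∈ L → x ∈ M → x = 0) ∧
  (∀ y z : E, y ∈ L → z ∈ M → (0 ≤ y + z ↔ 0 ≤ y ∧ 0 ≤ z))

/-- A homomorphism `ρ : G →* (E ≃ₗ[ℝ] E)` is a positive representation when each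
`ρ s` is an order isomorphism (hence a lattice automorphism). -/
def IsPositiveRep {E : Type*} [AddCommGroup E] [Lattice E] [Module ℝ E]
    {G : Type*} [Group G] (ρ : G →* (E ≃ₗ[ℝ] E)) : Prop :=
  ∀ (s : G) (x y : E), x ≤ y ↔ ρ s x ≤ ρ s y

/-- A submodule is `ρ`-invariant if it is mapped into itself by every `ρ s`. -/
def InvariantSubmodule {E : Type*} [AddCommGroup E] [Lattice E] [Module ℝ E]
    {G : Type*} [Group G] (ρ : G →* (E ≃ₗ[ℝ] E)) (B : Submodule ℝ E) : Prop :=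
  ∀ (s : G), ∀ x ∈ B, ρ s x ∈ B

/-- `ρ` is order indecomposable if the only `ρ`-invariant order direct sum
decompositions `E = L ⊕ M` are the trivial ones. -/
def OrderIndecomposable {E : Type*} [AddCommGroup E] [Lattice E] [Module ℝ E]
    {G : Type*} [Group G] (ρ : G →* (E ≃ₗ[ℝ] E)) : Prop :=
  ∀ L M : Submodule ℝ E, IsOrderDecomposition L M →
    InvariantSubmodule ρ L → InvariantSubmodule ρ M → L = ⊥ ∨ L = ⊤

/-- `ρ` is projection band irreducible if the only `ρ`-invariant projection bands
are `{0}` and `E`. -/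
def ProjectionBandIrreducible {E : Type*} [AddCommGroup E] [Lattice E] [Module ℝ E]
    {G : Type*} [Group G] (ρ : G →* (E ≃ₗ[ℝ] E)) : Prop :=
  ∀ B : Submodule ℝ E, IsProjectionBand B → InvariantSubmodule ρ B → B = ⊥ ∨ B = ⊤


/-- A principal band: the band generated by a single element, i.e. the smallest band
containing some element `x`. -/
def IsPrincipalBand {E : Type*} [AddCommGroup E] [Lattice E] [Module ℝ E]
    (B : Submodule ℝ E) : Prop :=
  IsBand B ∧ ∃ x ∈ B, ∀ C : Submodule ℝ E, IsBand C → x ∈ C → B ≤ C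

/-- `ρ` is principal band irreducible if the only `ρ`-invariant principal bands are
`{0}` and `E`. -/
def PrincipalBandIrreducible {E : Type*} [AddCommGroup E] [Lattice E] [Module ℝ E]
    {G : Type*} [Group G] (ρ : G →* (E ≃ₗ[ℝ] E)) : Prop :=
  ∀ B : Submodule ℝ E, IsPrincipalBand B → InvariantSubmodule ρ B → B = ⊥ ∨ B = ⊤

/-- `E` is Archimedean: if `0 ≤ n • x ≤ y` for all positive integers `n`, then `x = 0`. -/
def RieszArchimedean (E : Type*) [AddCommGroup E] [Lattice E] [Module ℝ E] : Prop :=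
  ∀ x y : E, (∀ n : ℕ, 0 < n → 0 ≤ n • x ∧ n • x ≤ y) → x = 0

section LatticeOrderedGroup

variable {E : Type*} [AddCommGroup E] [Lattice E]

lemma isLUB_image_posPart {D : Set E} {x : E} (hD : D.Nonempty) (hx : IsLUB D x) :
    IsLUB ((·⁺) '' D) x⁺ := by
  refine ⟨Set.forall_mem_image.2 fun d hd ↦ posPart_mono (hx.1 hd), fun z hz ↦ ?_⟩
  rw [mem_upperBounds, Set.forall_mem_image] at hz
  obtain ⟨d, hd⟩ := hD
  exact sup_le (hx.2 fun c hc ↦ (le_posPart c).trans (hz hc)) ((posPart_nonneg d).trans (hz hd))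

lemma inf_eq_zero_of_le {a b c d : E} (ha : 0 ≤ a) (hb : 0 ≤ b) (hac : a ≤ c) (hbd : b ≤ d)
    (h : c ⊓ d = 0) : a ⊓ b = 0 :=
  le_antisymm (h ▸ inf_le_inf hac hbd) (le_inf ha hb)

variable [IsOrderedAddMonoid E]

lemma eq_zero_of_abs_nonpos {a : E} (h : |a| ≤ 0) : a = 0 :=
  le_antisymm ((le_abs_self a).trans h) (neg_nonpos.1 ((neg_le_abs a).trans h))

lemma add_le_of_inf_eq_zero {a b c : E} (h : a ⊓ b = 0) (hac : a ≤ c) (hbc : b ≤ c) :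
    a + b ≤ c := by
  rw [← inf_add_sup, h, zero_add]
  exact sup_le hac hbc

lemma add_inf_le_inf_add_inf {a b c : E} (ha : 0 ≤ a) (hb : 0 ≤ b) (hc : 0 ≤ c) :
    (a + b) ⊓ c ≤ a ⊓ c + b ⊓ c := by
  rw [add_inf, inf_add]
  refine le_inf (inf_le_inf_left _ (le_add_of_nonneg_right hb)) ?_
  exact inf_le_right.trans (le_add_of_nonneg_left (le_inf ha hc))

lemma eq_zero_of_mem_disjComplement_singleton_self {x : E} (hx : x ∈ disjComplement {x}) : x = 0 :=
  eq_zero_of_abs_nonpos (inf_idem |x| ▸ hx x rfl).le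

end LatticeOrderedGroup

section OrderedModule

variable {E : Type*} [AddCommGroup E] [Lattice E] [Module ℝ E] [IsOrderedModule ℝ E]

lemma abs_smul_le_abs_smul_abs (c : ℝ) (x : E) : |c • x| ≤ |c| • |x| := by
  have key (z : E) : c • z ≤ |c| • |z| := by
    obtain hc | hc := le_total 0 c
    · rw [abs_of_nonneg hc]
      exact smul_le_smul_of_nonneg_left (le_abs_self z) hc
    · rw [abs_of_nonpos hc, ← neg_smul_neg]
      exact smul_le_smul_of_nonneg_left (neg_le_abs z) (neg_nonneg.2 hc)
  refine abs_le'.2 ⟨key x, ?_⟩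
  rw [← smul_neg, ← abs_neg x]
  exact key (-x)

end OrderedModule

section Band

variable {E : Type*} [AddCommGroup E] [Lattice E] [Module ℝ E]

lemma isBand_sInf {S : Set (Submodule ℝ E)} (hS : ∀ B ∈ S, IsBand B) : IsBand (sInf S) := by
  simp only [IsBand, IsRieszIdeal, Submodule.mem_sInf, Submodule.coe_sInf, Set.subset_iInter_iff]
  exact ⟨fun x y hxy hy B hB ↦ (hS B hB).1 x y hxy (hy B hB),
    fun D x hD hx B hB ↦ (hS B hB).2 D x (hD B hB) hx⟩

/-- The principal band generated by `x`: the intersection of all bands containing `x`. -/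
def principalBand (x : E) : Submodule ℝ E :=
  sInf {B | IsBand B ∧ x ∈ B}

lemma mem_principalBand_self (x : E) : x ∈ principalBand x :=
  Submodule.mem_sInf.2 fun _ hB ↦ hB.2

lemma principalBand_le {B : Submodule ℝ E} {x : E} (hB : IsBand B) (hx : x ∈ B) :
    principalBand x ≤ B :=
  sInf_le ⟨hB, hx⟩

lemma isPrincipalBand_principalBand (x : E) : IsPrincipalBand (principalBand x) :=
  ⟨isBand_sInf fun _ hB ↦ hB.1, x, mem_principalBand_self x, fun _ ↦ principalBand_le⟩

lemma IsRieszIdeal.isBand_of_nonneg [IsOrderedAddMonoid E] {I : Submodule ℝ E}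
    (hI : IsRieszIdeal I)
    (h : ∀ (D : Set E) (x : E), D ⊆ I → (∀ d ∈ D, 0 ≤ d) → IsLUB D x → 0 ≤ x → x ∈ I) :
    IsBand I := by
  refine ⟨hI, fun D x hD hx ↦ ?_⟩
  obtain rfl | hne := D.eq_empty_or_nonempty
  · have hx_zero : x = 0 :=
      eq_zero_of_abs_nonpos ((le_sub_self_iff x).1 (isLUB_empty_iff.1 hx (x - |x|)))
    exact hx_zero ▸ I.zero_mem
  have hpos : x⁺ ∈ I := by
    refine h _ _ ?_ (Set.forall_mem_image.2 fun d _ ↦ posPart_nonneg d)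
      (isLUB_image_posPart hne hx) (posPart_nonneg x)
    refine Set.image_subset_iff.2 fun d hd ↦ hI _ d ?_ (hD hd)
    rw [abs_of_nonneg (posPart_nonneg d), ← posPart_add_negPart]
    exact le_add_of_nonneg_right (negPart_nonneg d)
  have hneg : x⁻ ∈ I := by
    obtain ⟨d, hd⟩ := hne
    refine hI _ d ?_ (hD hd)
    rw [abs_of_nonneg (negPart_nonneg x), ← posPart_add_negPart]
    exact (negPart_anti (hx.1 hd)).trans (le_add_of_nonneg_left (posPart_nonneg d))
  exact posPart_sub_negPart x ▸ I.sub_mem hpos hneg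

end Band

section RieszSpace

variable {E : Type*} [AddCommGroup E] [Lattice E] [IsOrderedAddMonoid E] [Module ℝ E]
  [IsOrderedModule ℝ E]

/-- A solid additive submonoid of a Riesz space, viewed as a linear subspace; solidity makes the
closure under real scalars automatic. -/
def solidSubmodule (S : AddSubmonoid E) (hS : LatticeOrderedAddCommGroup.IsSolid (S : Set E)) :
    Submodule ℝ E where
  __ := S
  smul_mem' c x hx := by
    obtain ⟨n, hn⟩ := exists_nat_ge |c|
    have habs : |x| ∈ S := hS hx (abs_abs x).le
    refine hS (S.nsmul_mem habs n) ?_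
    rw [abs_of_nonneg (nsmul_nonneg (abs_nonneg x) n), ← Nat.cast_smul_eq_nsmul ℝ]
    exact (abs_smul_le_abs_smul_abs c x).trans (smul_le_smul_of_nonneg_right hn (abs_nonneg x))

lemma isRieszIdeal_solidSubmodule (S : AddSubmonoid E)
    (hS : LatticeOrderedAddCommGroup.IsSolid (S : Set E)) : IsRieszIdeal (solidSubmodule S hS) :=
  fun _ _ hxy hy ↦ hS hy hxy

/-- The disjoint complement `Dᵈ` as a linear subspace. -/
def disjComplementSubmodule (D : Set E) : Submodule ℝ E :=
  solidSubmodule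
    { carrier := disjComplement D
      zero_mem' := fun y _ ↦ by rw [abs_zero, inf_eq_left.2 (abs_nonneg y)]
      add_mem' := fun {a b} ha hb y hy ↦ by
        have h : (|a| + |b|) ⊓ |y| = 0 := by
          refine le_antisymm ?_ (le_inf (by positivity) (abs_nonneg y))
          refine (add_inf_le_inf_add_inf (abs_nonneg a) (abs_nonneg b) (abs_nonneg y)).trans ?_
          rw [ha y hy, hb y hy, add_zero]
        exact inf_eq_zero_of_le (abs_nonneg _) (abs_nonneg y) (abs_add_le a b) le_rfl h }
    fun _ hx _ hzx y hy ↦ inf_eq_zero_of_le (abs_nonneg _) (abs_nonneg y) hzx le_rfl (hx y hy)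

lemma isBand_disjComplementSubmodule (D : Set E) : IsBand (disjComplementSubmodule D) := by
  refine (isRieszIdeal_solidSubmodule _ _).isBand_of_nonneg fun C x hC hC₀ hx hx₀ y hy ↦ ?_
  rw [abs_of_nonneg hx₀]
  refine le_antisymm ?_ (le_inf hx₀ (abs_nonneg y))
  have hbound : x - x ⊓ |y| ∈ upperBounds C := fun d hd ↦ by
    have hd_disj : d ⊓ |y| = 0 := abs_of_nonneg (hC₀ d hd) ▸ hC hd y hy
    have hd_inf : d ⊓ (x ⊓ |y|) = 0 :=
      inf_eq_zero_of_le (hC₀ d hd) (le_inf hx₀ (abs_nonneg y)) le_rfl inf_le_right hd_disj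
    exact le_sub_iff_add_le.2 (add_le_of_inf_eq_zero hd_inf (hx.1 hd) inf_le_left)
  exact (le_sub_self_iff x).1 (hx.2 hbound)

lemma linearIndependent_of_abs_inf_abs_eq_zero {ι : Type*} {v : ι → E} (hv : ∀ i, v i ≠ 0)
    (hdisj : Pairwise fun i j ↦ |v i| ⊓ |v j| = 0) : LinearIndependent ℝ v := by
  refine linearIndependent_iff_notMem_span.2 fun i hi ↦ hv i ?_
  have hle : Submodule.span ℝ (v '' (Set.univ \ {i})) ≤ disjComplementSubmodule {v i} := by
    rw [Submodule.span_le, Set.image_subset_iff]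
    rintro j ⟨-, hj⟩ _ rfl
    exact hdisj hj
  exact eq_zero_of_mem_disjComplement_singleton_self (hle hi)

/-- The vectors that are infinitesimal relative to `f`, that is, dominated by every positive
multiple of `|f|`. -/
def infinitesimals (f : E) : Submodule ℝ E :=
  solidSubmodule
    { carrier := {x | ∀ ε : ℝ, 0 < ε → |x| ≤ ε • |f|}
      zero_mem' := fun ε hε ↦ abs_zero.trans_le (smul_nonneg hε.le (abs_nonneg f))
      add_mem' := fun {a b} ha hb ε hε ↦ calc
        |a + b| ≤ |a| + |b| := abs_add_le a b
        _ ≤ (ε / 2) • |f| + (ε / 2) • |f| := add_le_add (ha _ (half_pos hε)) (hb _ (half_pos hε))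
        _ = ε • |f| := by rw [← add_smul, add_halves] }
    fun _ hx _ hzx ε hε ↦ hzx.trans (hx ε hε)

lemma isBand_infinitesimals (f : E) : IsBand (infinitesimals f) := by
  refine (isRieszIdeal_solidSubmodule _ _).isBand_of_nonneg fun D x hD _ hx hx₀ ε hε ↦ ?_
  rw [abs_of_nonneg hx₀]
  exact hx.2 fun d hd ↦ (le_abs_self d).trans (hD hd ε hε)

lemma eq_zero_of_mem_infinitesimals_self {f : E} (hf : f ∈ infinitesimals f) : f = 0 := by
  have h : |f| + |f| ≤ |f| := by
    rw [← two_smul ℝ, ← le_inv_smul_iff_of_pos two_pos]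
    exact hf 2⁻¹ (inv_pos.2 two_pos)
  exact eq_zero_of_abs_nonpos (add_le_iff_nonpos_left.1 h)

lemma rieszArchimedean_iff_infinitesimals_eq_bot :
    RieszArchimedean E ↔ ∀ y : E, infinitesimals y = ⊥ := by
  refine ⟨fun hE y ↦ (Submodule.eq_bot_iff _).2 fun x hx ↦ ?_, fun h x y hxy ↦ ?_⟩
  · refine eq_zero_of_abs_nonpos (hE |x| |y| fun n hn ↦ ⟨nsmul_nonneg (abs_nonneg x) n, ?_⟩).le
    have hn' : (0 : ℝ) < n := Nat.cast_pos.2 hn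
    rw [← Nat.cast_smul_eq_nsmul ℝ, ← le_inv_smul_iff_of_pos hn']
    exact hx _ (inv_pos.2 hn')
  · have hx₀ : 0 ≤ x := one_nsmul x ▸ (hxy 1 one_pos).1
    refine (Submodule.eq_bot_iff _).1 (h y) x fun ε hε ↦ ?_
    obtain ⟨n, hn⟩ := exists_nat_gt ε⁻¹
    have hn₀ : 0 < n := Nat.cast_pos.1 ((inv_pos.2 hε).trans hn)
    rw [abs_of_nonneg hx₀, ← inv_smul_le_iff_of_pos hε]
    calc
      ε⁻¹ • x ≤ (n : ℝ) • x := smul_le_smul_of_nonneg_right hn.le hx₀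
      _ = n • x := Nat.cast_smul_eq_nsmul ℝ n x
      _ ≤ |y| := (hxy n hn₀).2.trans (le_abs_self y)

lemma RieszArchimedean.eq_zero_of_forall_le_smul (hE : RieszArchimedean E) {x y : E}
    (hx : 0 ≤ x) (hy : 0 ≤ y) (h : ∀ ε : ℝ, 0 < ε → x ≤ ε • y) : x = 0 := by
  refine (Submodule.eq_bot_iff _).1 (rieszArchimedean_iff_infinitesimals_eq_bot.1 hE y) x ?_
  intro ε hε
  rw [abs_of_nonneg hx, abs_of_nonneg hy]
  exact h ε hε

lemma RieszArchimedean.exists_isGreatest_smul_le (hE : RieszArchimedean E) {x y : E}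
    (hx : 0 ≤ x) (hy : 0 < y) : ∃ c : ℝ, IsGreatest {t : ℝ | t • y ≤ x} c := by
  have hne : {t : ℝ | t • y ≤ x}.Nonempty := ⟨0, (zero_smul ℝ y).trans_le hx⟩
  have hbdd : BddAbove {t : ℝ | t • y ≤ x} := by
    by_contra hunbdd
    refine hy.ne' (hE y x fun n _ ↦ ⟨nsmul_nonneg hy.le n, ?_⟩)
    obtain ⟨t, ht, hnt⟩ := not_bddAbove_iff.1 hunbdd n
    rw [← Nat.cast_smul_eq_nsmul ℝ]
    exact (smul_le_smul_of_nonneg_right hnt.le hy.le).trans ht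
  set c := sSup {t : ℝ | t • y ≤ x}
  have hpos : (c • y - x)⁺ = 0 := by
    refine hE.eq_zero_of_forall_le_smul (posPart_nonneg _) hy.le fun ε hε ↦ ?_
    obtain ⟨t, ht, hct⟩ := exists_lt_of_lt_csSup hne (sub_lt_self c hε)
    refine sup_le ?_ (smul_nonneg hε.le hy.le)
    calc
      c • y - x ≤ c • y - t • y := sub_le_sub_left ht _
      _ = (c - t) • y := (sub_smul c t y).symm
      _ ≤ ε • y := smul_le_smul_of_nonneg_right (by linarith) hy.le
  exact ⟨c, sub_nonpos.1 (posPart_eq_zero.1 hpos), fun t ht ↦ le_csSup hbdd ht⟩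

end RieszSpace

section Atom

/-- An atom of a Riesz space, in the disjointness form: a vector `y > 0` whose order interval
`[0, y]` contains no two disjoint nonzero vectors. In an Archimedean space this means
that `[0, y]` consists of multiples of `y`. -/
structure IsRieszAtom {E : Type*} [AddCommGroup E] [Lattice E] (y : E) : Prop where
  pos : 0 < y
  eq_zero_or_eq_zero : ∀ ⦃a b : E⦄, 0 ≤ a → 0 ≤ b → a ≤ y → b ≤ y → a ⊓ b = 0 → a = 0 ∨ b = 0

variable {E : Type*} [AddCommGroup E] [Lattice E] [IsOrderedAddMonoid E] [Module ℝ E]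
  [IsOrderedModule ℝ E] {x y z : E}

lemma IsRieszAtom.le_smul_or_smul_le (hy : IsRieszAtom y) (hz : 0 ≤ z) (hzy : z ≤ y) (t : ℝ) :
    z ≤ t • y ∨ t • y ≤ z := by
  have hy₀ : 0 ≤ y := hy.pos.le
  obtain ht | ht := le_total t 0
  · exact .inr ((smul_nonpos_of_nonpos_of_nonneg ht hy₀).trans hz)
  have hty : 0 ≤ t • y := smul_nonneg ht hy₀
  obtain ht' | ht' := le_total 1 t
  · exact .inl (hzy.trans (le_smul_of_one_le_left hy₀ ht'))
  have hpos : (z - t • y)⁺ ≤ y := sup_le ((sub_le_self z hty).trans hzy) hy₀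
  have hneg : (z - t • y)⁻ ≤ y := by
    refine sup_le ?_ hy₀
    rw [neg_sub]
    refine (sub_le_self _ hz).trans ?_
    exact smul_le_of_le_one_left hy₀ ht'
  exact (hy.eq_zero_or_eq_zero (posPart_nonneg _) (negPart_nonneg _) hpos hneg
    (posPart_inf_negPart_eq_zero _)).imp
    (fun h ↦ sub_nonpos.1 (posPart_eq_zero.1 h)) (fun h ↦ sub_nonneg.1 (negPart_eq_zero.1 h))

lemma IsRieszAtom.exists_eq_smul (hy : IsRieszAtom y) (hE : RieszArchimedean E) (hz : 0 ≤ z)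
    (hzy : z ≤ y) : ∃ c : ℝ, 0 ≤ c ∧ z = c • y := by
  obtain ⟨c, hcz, hc⟩ := hE.exists_isGreatest_smul_le hz hy.pos
  refine ⟨c, hc ((zero_smul ℝ y).trans_le hz), sub_eq_zero.1 ?_⟩
  refine hE.eq_zero_of_forall_le_smul (sub_nonneg.2 hcz) hy.pos.le fun ε hε ↦ ?_
  have hlarge : z ≤ (c + ε) • y :=
    (hy.le_smul_or_smul_le hz hzy (c + ε)).resolve_right fun h ↦
      (lt_add_of_pos_right c hε).not_ge (hc h)
  rwa [sub_le_iff_le_add', ← add_smul]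

lemma IsRieszAtom.inf_eq_zero_or_exists_eq_smul (hy : IsRieszAtom y) (hz : IsRieszAtom z)
    (hE : RieszArchimedean E) : y ⊓ z = 0 ∨ ∃ c : ℝ, 0 ≤ c ∧ z = c • y := by
  have hyz : 0 ≤ y ⊓ z := le_inf hy.pos.le hz.pos.le
  obtain ⟨a, ha, hay⟩ := hy.exists_eq_smul hE hyz inf_le_left
  obtain ⟨b, hb, hbz⟩ := hz.exists_eq_smul hE hyz inf_le_right
  obtain rfl | hb' := eq_or_ne b 0
  · exact .inl (hbz.trans (zero_smul ℝ z))
  · refine .inr ⟨b⁻¹ * a, mul_nonneg (inv_nonneg.2 hb) ha, ?_⟩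
    rw [mul_smul, ← hay, hbz, inv_smul_smul₀ hb']

lemma IsRieszAtom.exists_sub_smul_inf_eq_zero (hy : IsRieszAtom y) (hE : RieszArchimedean E)
    (hx : 0 ≤ x) : ∃ c : ℝ, 0 ≤ c ∧ c • y ≤ x ∧ (x - c • y) ⊓ y = 0 := by
  obtain ⟨c, hcx, hc⟩ := hE.exists_isGreatest_smul_le hx hy.pos
  refine ⟨c, hc ((zero_smul ℝ y).trans_le hx), hcx, ?_⟩
  obtain ⟨d, hd, hdy⟩ :=
    hy.exists_eq_smul hE (le_inf (sub_nonneg.2 hcx) hy.pos.le) inf_le_right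
  have hle : (c + d) • y ≤ x := by
    rw [add_smul, ← hdy, ← le_sub_iff_add_le']
    exact inf_le_left
  have hd₀ : d = 0 := le_antisymm (nonpos_of_add_le_right (hc hle)) hd
  rw [hdy, hd₀, zero_smul]

lemma exists_mem_span_sub_mem_disjComplement (hE : RieszArchimedean E) {s : Set E}
    (hs : s.Finite) (hatom : ∀ y ∈ s, IsRieszAtom y) (hx : 0 ≤ x) :
    ∃ u ∈ Submodule.span ℝ s, u ≤ x ∧ x - u ∈ disjComplement s := by
  induction s, hs using Set.Finite.induction_on with
  | empty => exact ⟨0, zero_mem _, hx, fun _ h ↦ h.elim⟩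
  | @insert y s _ _ ih =>
    obtain ⟨hy, hs⟩ := Set.forall_mem_insert.1 hatom
    obtain ⟨u, hu, hux, hdisj⟩ := ih hs
    obtain ⟨c, hc, hcx, hcy⟩ := hy.exists_sub_smul_inf_eq_zero hE (sub_nonneg.2 hux)
    have hrem : 0 ≤ x - u - c • y := sub_nonneg.2 hcx
    refine ⟨u + c • y, ?_, by rwa [← sub_nonneg, ← sub_sub], ?_⟩
    · exact add_mem (Submodule.span_mono (Set.subset_insert y s) hu)
        (Submodule.smul_mem _ c (Submodule.subset_span (Set.mem_insert y s)))
    · rw [← sub_sub]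
      refine Set.forall_mem_insert.2 ⟨?_, fun v hv ↦ ?_⟩
      · rwa [abs_of_nonneg hrem, abs_of_nonneg hy.pos.le]
      · refine inf_eq_zero_of_le (abs_nonneg _) (abs_nonneg v) ?_ le_rfl (hdisj v hv)
        rw [abs_of_nonneg hrem, abs_of_nonneg (sub_nonneg.2 hux)]
        exact sub_le_self _ (smul_nonneg hc hy.pos.le)

lemma span_eq_top_of_isRieszAtom (hE : RieszArchimedean E) {s : Set E} (hs : s.Finite)
    (hatom : ∀ y ∈ s, IsRieszAtom y) (hdisj : ∀ y ∈ disjComplement s, y = 0) :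
    Submodule.span ℝ s = ⊤ := by
  have hmem {x : E} (hx : 0 ≤ x) : x ∈ Submodule.span ℝ s := by
    obtain ⟨u, hu, -, hxu⟩ := exists_mem_span_sub_mem_disjComplement hE hs hatom hx
    rwa [sub_eq_zero.1 (hdisj _ hxu)]
  refine (Submodule.eq_top_iff').2 fun x ↦ posPart_sub_negPart x ▸ ?_
  exact sub_mem (hmem (posPart_nonneg x)) (hmem (negPart_nonneg x))

end Atom

section LinearRepresentation

variable {G E : Type*} [Group G] [AddCommGroup E]

lemma eq_one_of_apply_eq_smul {k : Type*} [Field k] [LinearOrder k] [IsStrictOrderedRing k]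
    [Module k E] {ρ : G →* (E ≃ₗ[k] E)} [Finite G] {g : G} {x : E} {c : k} (hc : 0 ≤ c) (hx : x ≠ 0)
    (h : ρ g x = c • x) : c = 1 := by
  have hpow (n : ℕ) : ρ (g ^ n) x = c ^ n • x := by
    induction n with
    | zero => simp only [pow_zero, map_one, LinearEquiv.coe_one, id_eq, one_smul]
    | succ n ih =>
      rw [pow_succ', map_mul, LinearEquiv.mul_apply, ih, map_smul, h, smul_smul, pow_succ]
  have hcard : c ^ Nat.card G = 1 := by
    refine smul_left_injective k hx ?_
    simp only [← hpow, pow_card_eq_one', map_one, LinearEquiv.coe_one, id_eq, one_smul]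
  exact (pow_eq_one_iff_of_nonneg hc Nat.card_pos.ne').1 hcard

lemma natCard_orbit_dvd_natCard {k : Type*} [Semiring k] [Module k E]
    (ρ : G →* (E ≃ₗ[k] E)) (y : E) :
    Nat.card (Set.range fun g ↦ ρ g y) ∣ Nat.card G := by
  let := MulAction.compHom E ρ
  have h : (MulAction.stabilizer G y).index = Nat.card (Set.range fun g ↦ ρ g y) :=
    MulAction.index_stabilizer G y
  exact h ▸ Subgroup.index_dvd_card _

end LinearRepresentation

section PositiveRepresentation

variable {G E : Type*} [Group G] [AddCommGroup E] [Lattice E] [Module ℝ E]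
  {ρ : G →* (E ≃ₗ[ℝ] E)}

/-- The operator `ρ g` of a positive representation as an order automorphism. -/
def IsPositiveRep.toOrderIso (hρ : IsPositiveRep ρ) (g : G) : E ≃o E :=
  ⟨(ρ g).toEquiv, (hρ g _ _).symm⟩

lemma IsPositiveRep.map_inf (hρ : IsPositiveRep ρ) (g : G) (x y : E) :
    ρ g (x ⊓ y) = ρ g x ⊓ ρ g y :=
  (hρ.toOrderIso g).map_inf x y

lemma IsPositiveRep.map_abs (hρ : IsPositiveRep ρ) (g : G) (x : E) : ρ g |x| = |ρ g x| := by
  rw [abs, abs, ← map_neg]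
  exact (hρ.toOrderIso g).map_sup x (-x)

lemma IsPositiveRep.apply_nonneg_iff (hρ : IsPositiveRep ρ) (g : G) (x : E) :
    0 ≤ ρ g x ↔ 0 ≤ x := by
  rw [hρ g 0 x, map_zero]

lemma IsPositiveRep.isRieszAtom_apply (hρ : IsPositiveRep ρ) {y : E} (hy : IsRieszAtom y) (g : G) :
    IsRieszAtom (ρ g y) where
  pos := ((hρ.apply_nonneg_iff g y).2 hy.pos.le).lt_of_ne'
    ((map_ne_zero_iff _ (ρ g).injective).2 hy.pos.ne')
  eq_zero_or_eq_zero a b ha hb hay hby hab := by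
    obtain ⟨a, rfl⟩ := (ρ g).surjective a
    obtain ⟨b, rfl⟩ := (ρ g).surjective b
    simp only [hρ.apply_nonneg_iff, ← hρ g, ← hρ.map_inf, map_eq_zero_iff _ (ρ g).injective]
      at ha hb hay hby hab ⊢
    exact hy.eq_zero_or_eq_zero ha hb hay hby hab

lemma IsBand.comap_apply {B : Submodule ℝ E} (hB : IsBand B) (hρ : IsPositiveRep ρ) (g : G) :
    IsBand (B.comap (ρ g : E →ₗ[ℝ] E)) := by
  refine ⟨fun x y hxy hy ↦ hB.1 _ (ρ g y) ?_ hy, fun D x hD hx ↦ ?_⟩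
  · rwa [LinearEquiv.coe_coe, ← hρ.map_abs, ← hρ.map_abs, ← hρ g]
  · exact hB.2 (ρ g '' D) _ (Set.image_subset_iff.2 hD) ((hρ.toOrderIso g).isLUB_image'.2 hx)

/-- The sum `∑ g, ρ g |x|` of the absolute values of the orbit of `x`: a `ρ`-invariant vector
dominating that orbit. -/
def orbitSum [Fintype G] (ρ : G →* (E ≃ₗ[ℝ] E)) (x : E) : E :=
  ∑ g, ρ g |x|

lemma apply_orbitSum [Fintype G] (g : G) (x : E) : ρ g (orbitSum ρ x) = orbitSum ρ x := by
  rw [orbitSum, map_sum]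
  refine Fintype.sum_equiv (Equiv.mulLeft g) _ _ fun h ↦ ?_
  rw [Equiv.coe_mulLeft, map_mul, LinearEquiv.mul_apply]

lemma IsRieszIdeal.orbitSum_mem [Fintype G] [IsOrderedAddMonoid E] {I : Submodule ℝ E}
    (hI : IsRieszIdeal I) (hρ : IsPositiveRep ρ) {x : E} (hx : ∀ g, ρ g x ∈ I) :
    orbitSum ρ x ∈ I :=
  sum_mem fun g _ ↦ hI _ _ (by rw [hρ.map_abs, abs_abs]) (hx g)

lemma IsPositiveRep.abs_apply_le_orbitSum [Fintype G] [IsOrderedAddMonoid E]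
    (hρ : IsPositiveRep ρ) (g : G) (x : E) : |ρ g x| ≤ orbitSum ρ x := by
  rw [← hρ.map_abs]
  exact Finset.single_le_sum (f := fun h ↦ ρ h |x|)
    (fun h _ ↦ (hρ.apply_nonneg_iff h _).2 (abs_nonneg x)) (Finset.mem_univ g)

lemma IsRieszAtom.apply_inf_apply_eq_zero [Finite G] [IsOrderedAddMonoid E] [IsOrderedModule ℝ E]
    {y : E} (hy : IsRieszAtom y) (hE : RieszArchimedean E) (hρ : IsPositiveRep ρ) {g h : G}
    (hne : ρ g y ≠ ρ h y) : ρ g y ⊓ ρ h y = 0 := by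
  have hgy := hρ.isRieszAtom_apply hy g
  refine (hgy.inf_eq_zero_or_exists_eq_smul (hρ.isRieszAtom_apply hy h) hE).resolve_right ?_
  rintro ⟨c, hc, hhc⟩
  have hact : ρ (h * g⁻¹) (ρ g y) = c • ρ g y := by
    rw [← LinearEquiv.mul_apply, ← map_mul, inv_mul_cancel_right, hhc]
  have hc₁ : c = 1 := eq_one_of_apply_eq_smul hc hgy.pos.ne' hact
  exact hne (by rw [hhc, hc₁, one_smul])

end PositiveRepresentation

section PrincipalBandIrreducible

variable {G E : Type*} [Group G] [Finite G] [AddCommGroup E] [Lattice E] [IsOrderedAddMonoid E]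
  [Module ℝ E] {ρ : G →* (E ≃ₗ[ℝ] E)}

lemma PrincipalBandIrreducible.eq_top_of_isBand (hirr : PrincipalBandIrreducible ρ)
    (hρ : IsPositiveRep ρ) {B : Submodule ℝ E} (hB : IsBand B) {x : E} (hx : x ≠ 0)
    (hxB : ∀ g, ρ g x ∈ B) : B = ⊤ := by
  cases nonempty_fintype G
  have hinv : InvariantSubmodule ρ (principalBand (orbitSum ρ x)) := fun g ↦ by
    refine principalBand_le ((isPrincipalBand_principalBand _).1.comap_apply hρ g) ?_
    rw [Submodule.mem_comap, LinearEquiv.coe_coe, apply_orbitSum]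
    exact mem_principalBand_self _
  have hne : principalBand (orbitSum ρ x) ≠ ⊥ := fun h ↦ by
    have hzero : orbitSum ρ x = 0 := (Submodule.eq_bot_iff _).1 h _ (mem_principalBand_self _)
    have hle := hρ.abs_apply_le_orbitSum 1 x
    rw [map_one, LinearEquiv.coe_one, id_eq, hzero] at hle
    exact hx (eq_zero_of_abs_nonpos hle)
  refine top_le_iff.1 ?_
  rw [← (hirr _ (isPrincipalBand_principalBand _) hinv).resolve_left hne]
  exact principalBand_le hB (hB.1.orbitSum_mem hρ hxB)

variable [IsOrderedModule ℝ E]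

lemma PrincipalBandIrreducible.rieszArchimedean (hirr : PrincipalBandIrreducible ρ)
    (hρ : IsPositiveRep ρ) : RieszArchimedean E := by
  cases nonempty_fintype G
  refine rieszArchimedean_iff_infinitesimals_eq_bot.2 fun y ↦
    (Submodule.eq_bot_iff _).2 fun x hx ↦ by_contra fun hx₀ ↦ hx₀ ?_
  have hmem (g : G) : ρ g x ∈ infinitesimals (orbitSum ρ y) := fun ε hε ↦ calc
    |ρ g x| = ρ g |x| := (hρ.map_abs g x).symm
    _ ≤ ρ g (ε • |y|) := (hρ g _ _).1 (hx ε hε)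
    _ = ε • |ρ g y| := by rw [map_smul, hρ.map_abs]
    _ ≤ ε • |orbitSum ρ y| := smul_le_smul_of_nonneg_left
      ((hρ.abs_apply_le_orbitSum g y).trans (le_abs_self _)) hε.le
  have htop : infinitesimals (orbitSum ρ y) = ⊤ :=
    hirr.eq_top_of_isBand hρ (isBand_infinitesimals _) hx₀ hmem
  have hzero : orbitSum ρ y = 0 :=
    eq_zero_of_mem_infinitesimals_self (htop ▸ Submodule.mem_top)
  have hx_inf : x ∈ infinitesimals (0 : E) := hzero ▸ htop ▸ Submodule.mem_top
  exact eq_zero_of_abs_nonpos (by simpa only [abs_zero, smul_zero] using hx_inf 1 one_pos)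

lemma PrincipalBandIrreducible.eq_zero_of_mem_disjComplement_orbit
    (hirr : PrincipalBandIrreducible ρ) (hρ : IsPositiveRep ρ) {x : E} (hx : x ≠ 0) :
    ∀ y ∈ disjComplement (Set.range fun g ↦ ρ g x), y = 0 := by
  intro y hy
  have htop : disjComplementSubmodule {y} = ⊤ :=
    hirr.eq_top_of_isBand hρ (isBand_disjComplementSubmodule _) hx fun g ↦ by
      rintro _ rfl
      rw [inf_comm]
      exact hy _ ⟨g, rfl⟩
  have hy_self : y ∈ disjComplementSubmodule {y} := htop ▸ Submodule.mem_top
  exact eq_zero_of_mem_disjComplement_singleton_self hy_self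

lemma PrincipalBandIrreducible.exists_isRieszAtom [Nontrivial E]
    (hirr : PrincipalBandIrreducible ρ) (hρ : IsPositiveRep ρ) : ∃ y : E, IsRieszAtom y := by
  obtain ⟨x, hx⟩ := exists_ne (0 : E)
  have hx_pos : 0 < |x| := (abs_nonneg x).lt_of_ne' fun h ↦ hx (eq_zero_of_abs_nonpos h.le)
  obtain ⟨y, hy, hmax⟩ := exists_maximalFor_of_wellFoundedGT (fun y : E ↦ 0 < y)
    (fun y ↦ {g : G | y ⊓ ρ g y = 0}) ⟨|x|, hx_pos⟩
  refine ⟨y, hy, fun a b ha hb hay hby hab ↦ or_iff_not_imp_left.2 fun ha₀ ↦ ?_⟩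
  refine hirr.eq_zero_of_mem_disjComplement_orbit hρ ha₀ b (Set.forall_mem_range.2 fun g ↦ ?_)
  rw [← hρ.map_abs, abs_of_nonneg ha, abs_of_nonneg hb]
  by_contra hne
  -- If `b` meets `ρ g a`, the part `d` of `a` that `ρ g` moves into `b` contradicts maximality.
  obtain ⟨b', rfl⟩ := (ρ g).surjective b
  rw [hρ.apply_nonneg_iff] at hb
  let d := a ⊓ b'
  have hda : d ≤ a := inf_le_left
  have hdb : ρ g d ≤ ρ g b' := (hρ g _ _).1 inf_le_right
  have hd_nonneg : 0 ≤ d := le_inf ha hb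
  have hd_nonneg' (h : G) : 0 ≤ ρ h d := (hρ.apply_nonneg_iff h d).2 hd_nonneg
  have hd_ne : ρ g d ≠ 0 := by rwa [hρ.map_inf, inf_comm]
  have hd_pos : 0 < d := hd_nonneg.lt_of_ne' fun h ↦ hd_ne (by rw [h, map_zero])
  have hsub : {h : G | y ⊓ ρ h y = 0} ⊆ {h : G | d ⊓ ρ h d = 0} := fun h ↦
    inf_eq_zero_of_le hd_nonneg (hd_nonneg' h) (hda.trans hay) ((hρ h _ _).1 (hda.trans hay))
  have hg : y ⊓ ρ g y = 0 := hmax hd_pos hsub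
    (inf_eq_zero_of_le hd_nonneg (hd_nonneg' g) hda hdb hab : d ⊓ ρ g d = 0)
  have hdy : ρ g d ≤ y ⊓ ρ g y := le_inf (hdb.trans hby) ((hρ g _ _).1 (hda.trans hay))
  exact hd_ne (le_antisymm (hg ▸ hdy) (hd_nonneg' g))

end PrincipalBandIrreducible

/-- If a finite group `G` has a principal band irreducible positive representation in a
nonzero Riesz space `E`, then `E` is Archimedean, finite dimensional, and the dimension
of `E` divides the order of `G`. -/
theorem stmt7 {G E : Type*} [Group G] [Finite G] [AddCommGroup E] [Lattice E] [Module ℝ E]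
    [Nontrivial E]
    (hadd : ∀ x y z : E, x ≤ y → x + z ≤ y + z)
    (hsmul : ∀ (c : ℝ) (x : E), 0 ≤ c → 0 ≤ x → 0 ≤ c • x)
    (ρ : G →* (E ≃ₗ[ℝ] E)) (hρ : IsPositiveRep ρ)
    (hirr : PrincipalBandIrreducible ρ) :
    RieszArchimedean E ∧ FiniteDimensional ℝ E ∧ Module.finrank ℝ E ∣ Nat.card G := by
  have : IsOrderedAddMonoid E := { add_le_add_left := fun x y h z ↦ hadd x y z h }
  have : IsOrderedModule ℝ E := .of_smul_nonneg fun c hc x hx ↦ hsmul c x hc hx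
  have hE : RieszArchimedean E := hirr.rieszArchimedean hρ
  obtain ⟨y, hy⟩ := hirr.exists_isRieszAtom hρ
  let orbit : Set E := Set.range fun g ↦ ρ g y
  have hatom : ∀ v ∈ orbit, IsRieszAtom v := Set.forall_mem_range.2 (hρ.isRieszAtom_apply hy)
  have hli : LinearIndependent ℝ ((↑) : orbit → E) := by
    refine linearIndependent_of_abs_inf_abs_eq_zero (fun v ↦ (hatom v v.2).pos.ne') ?_
    rintro ⟨_, g, rfl⟩ ⟨_, h, rfl⟩ hne
    simpa only [abs_of_nonneg (hρ.isRieszAtom_apply hy _).pos.le] using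
      hy.apply_inf_apply_eq_zero hE hρ (Subtype.coe_ne_coe.2 hne)
  have hspan : Submodule.span ℝ orbit = ⊤ :=
    span_eq_top_of_isRieszAtom hE (Set.finite_range _) hatom
      (hirr.eq_zero_of_mem_disjComplement_orbit hρ hy.pos.ne')
  let b : Module.Basis orbit ℝ E := .mk hli (by rw [Subtype.range_coe, hspan])
  refine ⟨hE, .of_basis b, ?_⟩
  rw [Module.finrank_eq_nat_card_basis b]
  exact natCard_orbit_dvd_natCard ρ y
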